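/- (Theorem 2: the min-small-change policy enables fully loaded IFDMA systems.) Let m be a natural number and let N_1, …, N_K be powers of two (each at most 2^m) with ∑_{k=1}^K N_k ≤ 2^m, presented in an arbitrary order. Then there exist pairwise disjoint aligned blocks A_1, …, A_K ⊆ {0,1,…,2^m−1} with |A_k| = N_k for each k, such that for every k ∈ {0,1,…,K}, the set {0,1,…,2^m−1} \ (A_1 ∪ ⋯ ∪ A_k) of remaining free bins is a disjoint union of aligned blocks whose sizes are pairwise distinct powers of two (the empty set counting as such a union). -/

import Mathlib

/-- The aligned block of size `2^i` with index `c`: `{c·2^i, …, (c+1)·2^i−1}`. -/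
def alignedBlock (i c : ℕ) : Finset ℕ := Finset.Ico (c * 2 ^ i) ((c + 1) * 2 ^ i)

/-- `F ⊆ {0,…,2^m−1}` is a disjoint union of aligned blocks whose sizes are pairwise
distinct powers of two (the empty union being allowed). -/
def GoodFree (m : ℕ) (F : Finset ℕ) : Prop :=
  ∃ (E : Finset ℕ) (c : ℕ → ℕ),
    (∀ i ∈ E, i ≤ m ∧ c i < 2 ^ (m - i)) ∧
    (∀ i ∈ E, ∀ j ∈ E, i ≠ j → Disjoint (alignedBlock i (c i)) (alignedBlock j (c j))) ∧
    F = E.biUnion fun i => alignedBlock i (c i)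

theorem mem_ab (i c x : ℕ) : x ∈ alignedBlock i c ↔ c * 2 ^ i ≤ x ∧ x < c * 2 ^ i + 2 ^ i := by
  simp [alignedBlock, add_mul]

theorem card_ab (i c : ℕ) : (alignedBlock i c).card = 2 ^ i := by
  simp [alignedBlock, add_mul]

theorem idx_split (c k j : ℕ) (h : k ≤ j) : c * 2 ^ (j - k) * 2 ^ k = c * 2 ^ j := by
  rw [mul_assoc, ← pow_add, Nat.sub_add_cancel h]

theorem mem_new (c k j x : ℕ) (h : k ≤ j) :
    x ∈ alignedBlock k (c * 2 ^ (j - k) + 1) ↔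
      c * 2 ^ j + 2 ^ k ≤ x ∧ x < c * 2 ^ j + 2 ^ (k + 1) := by
  rw [mem_ab, add_mul, idx_split c k j h, pow_succ]
  constructor <;> rintro ⟨h1, h2⟩ <;> constructor <;> omega

theorem idx_bound (m j k c : ℕ) (hj : j ≤ m) (hk : k < j) (hc : c < 2 ^ (m - j)) :
    c * 2 ^ (j - k) + 1 < 2 ^ (m - k) := by
  have h1 : 2 ^ (m - k) = 2 ^ (m - j) * 2 ^ (j - k) := by
    rw [← pow_add]; congr 1; omega
  have h2 : 2 ≤ 2 ^ (j - k) := by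
    calc 2 = 2 ^ 1 := rfl
      _ ≤ 2 ^ (j - k) := Nat.pow_le_pow_right (by norm_num) (by omega)
  rw [h1]
  nlinarith

theorem step (m n : ℕ) (hn : n ≤ m) (F : Finset ℕ) (hF : GoodFree m F) (hcard : 2 ^ n ≤ F.card) :
    ∃ a, a < 2 ^ (m - n) ∧ alignedBlock n a ⊆ F ∧ GoodFree m (F \ alignedBlock n a) := by
  obtain ⟨E, c, hb, hd, rfl⟩ := hF
  have hex : ∃ i, i ∈ E ∧ n ≤ i := by
    by_contra! hcon
    have h1 : (E.biUnion fun i => alignedBlock i (c i)).card ≤ ∑ i ∈ E, 2 ^ i := by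
      refine Finset.card_biUnion_le.trans (le_of_eq ?_)
      exact Finset.sum_congr rfl fun i _ => card_ab i (c i)
    have h2 : ∑ i ∈ E, 2 ^ i < 2 ^ n := Nat.geomSum_lt (le_refl 2) hcon
    omega
  classical
  obtain ⟨hjE, hnj⟩ := Nat.find_spec hex
  have hmin : ∀ k, k < Nat.find hex → n ≤ k → k ∉ E := fun k hk h1 h2 =>
    Nat.find_min hex hk ⟨h2, h1⟩
  generalize Nat.find hex = j at hjE hnj hmin
  obtain ⟨hjm, hcj⟩ := hb j hjE
  have hpnj : 2 ^ n ≤ 2 ^ j := Nat.pow_le_pow_right (by norm_num) hnj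
  have hA : ∀ x, x ∈ alignedBlock n (c j * 2 ^ (j - n)) ↔
      c j * 2 ^ j ≤ x ∧ x < c j * 2 ^ j + 2 ^ n := by
    intro x; rw [mem_ab, idx_split _ _ _ hnj]
  have hAsub : ∀ x, x ∈ alignedBlock n (c j * 2 ^ (j - n)) → x ∈ alignedBlock j (c j) := by
    intro x; rw [hA, mem_ab]; omega
  have hNsub : ∀ k, k < j → ∀ x, x ∈ alignedBlock k (c j * 2 ^ (j - k) + 1) →
      x ∈ alignedBlock j (c j) := by
    intro k hk x
    have : 2 ^ (k + 1) ≤ 2 ^ j := Nat.pow_le_pow_right (by norm_num) hk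
    rw [mem_new _ _ _ _ hk.le, mem_ab]; omega
  refine ⟨c j * 2 ^ (j - n), ?_, ?_, ?_⟩
  · have h1 : 2 ^ (m - n) = 2 ^ (m - j) * 2 ^ (j - n) := by
      rw [← pow_add]; congr 1; omega
    rw [h1]
    exact Nat.mul_lt_mul_of_pos_right hcj (by positivity)
  · intro x hx
    exact Finset.mem_biUnion.2 ⟨j, hjE, hAsub x hx⟩
  let c' : ℕ → ℕ := fun k => if k ∈ E then c k else c j * 2 ^ (j - k) + 1
  have hcE : ∀ k ∈ E, c' k = c k := fun k hk => if_pos hk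
  have hcN : ∀ k, n ≤ k → k < j → c' k = c j * 2 ^ (j - k) + 1 :=
    fun k h1 h2 => if_neg (hmin k h2 h1)
  have hmemE : ∀ k, k ∈ E.erase j ∪ Finset.Ico n j ↔ (k ≠ j ∧ k ∈ E) ∨ (n ≤ k ∧ k < j) := by
    intro k; simp
  have hEN : ∀ i, i ≠ j → i ∈ E → ∀ k, n ≤ k → k < j →
      Disjoint (alignedBlock i (c' i)) (alignedBlock k (c' k)) := by
    intro i hij hi k h1 h2
    rw [hcE i hi, hcN k h1 h2]
    exact (hd i hi j hjE hij).mono_right (fun x hx => hNsub k h2 x hx)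
  have hNN : ∀ i, n ≤ i → i < j → ∀ k, n ≤ k → k < j → i < k →
      Disjoint (alignedBlock i (c' i)) (alignedBlock k (c' k)) := by
    intro i hi1 hi2 k h1 h2 hik
    rw [hcN i hi1 hi2, hcN k h1 h2, Finset.disjoint_left]
    intro x
    rw [mem_new _ _ _ _ hi2.le, mem_new _ _ _ _ h2.le]
    have : 2 ^ (i + 1) ≤ 2 ^ k := Nat.pow_le_pow_right (by norm_num) hik
    omega
  refine ⟨E.erase j ∪ Finset.Ico n j, c', ?_, ?_, ?_⟩
  · intro i hi
    rcases (hmemE i).1 hi with ⟨_, hi⟩ | ⟨h1, h2⟩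
    · rw [hcE i hi]; exact hb i hi
    · rw [hcN i h1 h2]; exact ⟨by omega, idx_bound m j i _ hjm h2 hcj⟩
  · intro i hi k hk hik
    rcases (hmemE i).1 hi with ⟨hi0, hi⟩ | ⟨hi1, hi2⟩ <;>
    rcases (hmemE k).1 hk with ⟨hk0, hk⟩ | ⟨hk1, hk2⟩
    · rw [hcE i hi, hcE k hk]; exact hd i hi k hk hik
    · exact hEN i hi0 hi k hk1 hk2
    · exact (hEN k hk0 hk i hi1 hi2).symm
    · rcases lt_or_gt_of_ne hik with h | h
      · exact hNN i hi1 hi2 k hk1 hk2 h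
      · exact (hNN k hk1 hk2 i hi1 hi2 h).symm
  · ext x
    rw [Finset.mem_sdiff, Finset.mem_biUnion, Finset.mem_biUnion]
    constructor
    · rintro ⟨⟨i, hi, hx⟩, hxA⟩
      by_cases hij : i = j
      · subst hij
        rw [hA] at hxA
        rw [mem_ab] at hx
        have hpn : 0 < 2 ^ n := by positivity
        obtain ⟨y, rfl⟩ := Nat.exists_eq_add_of_le hx.1
        have hy0 : y ≠ 0 := by omega
        have hy1 : 2 ^ n ≤ y := by omega
        have hy2 : y < 2 ^ i := by omega
        have hl1 : 2 ^ Nat.log 2 y ≤ y := Nat.pow_log_le_self 2 hy0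
        have hl2 : y < 2 ^ (Nat.log 2 y + 1) := Nat.lt_pow_succ_log_self (by norm_num) y
        have hk1 : n ≤ Nat.log 2 y := Nat.le_log_of_pow_le (by norm_num) hy1
        have hk2 : Nat.log 2 y < i := Nat.log_lt_of_lt_pow hy0 hy2
        refine ⟨Nat.log 2 y, (hmemE _).2 (Or.inr ⟨hk1, hk2⟩), ?_⟩
        rw [hcN _ hk1 hk2, mem_new _ _ _ _ hk2.le]
        omega
      · exact ⟨i, (hmemE i).2 (Or.inl ⟨hij, hi⟩), by rw [hcE i hi]; exact hx⟩
    · rintro ⟨i, hi, hx⟩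
      rcases (hmemE i).1 hi with ⟨hi0, hi⟩ | ⟨hi1, hi2⟩
      · rw [hcE i hi] at hx
        exact ⟨⟨i, hi, hx⟩, fun hxA =>
          Finset.disjoint_left.1 (hd i hi j hjE hi0) hx (hAsub x hxA)⟩
      · rw [hcN i hi1 hi2] at hx
        refine ⟨⟨j, hjE, hNsub i hi2 x hx⟩, fun hxA => ?_⟩
        rw [hA] at hxA
        rw [mem_new _ _ _ _ hi2.le] at hx
        have : 2 ^ n ≤ 2 ^ i := Nat.pow_le_pow_right (by norm_num) hi1
        omega

/-- Theorem 2 (the min-small-change policy enables fully loaded IFDMA systems):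
power-of-two requests `N_1, …, N_K` with `∑ N_k ≤ 2^m`, presented in arbitrary order,
can be granted pairwise disjoint aligned blocks such that after every allocation the
set of remaining free bins is a disjoint union of aligned blocks with pairwise
distinct power-of-two sizes. -/
theorem min_small_change_full_loading (m K : ℕ) (N : ℕ → ℕ)
    (hpow : ∀ k < K, ∃ n ≤ m, N k = 2 ^ n)
    (hsum : ∑ k ∈ Finset.range K, N k ≤ 2 ^ m) :
    ∃ A : ℕ → Finset ℕ,
      (∀ k < K, ∃ i a, i ≤ m ∧ a < 2 ^ (m - i) ∧ N k = 2 ^ i ∧ A k = alignedBlock i a) ∧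
      (∀ k < K, ∀ l < K, k ≠ l → Disjoint (A k) (A l)) ∧
      (∀ k ≤ K, GoodFree m (Finset.range (2 ^ m) \ (Finset.range k).biUnion A)) := by
  induction K with
  | zero =>
    refine ⟨fun _ => ∅, by simp, by simp, ?_⟩
    intro k hk
    obtain rfl : k = 0 := by omega
    refine ⟨{m}, fun _ => 0, by simp, ?_, ?_⟩
    · intro i hi j hj hij
      simp only [Finset.mem_singleton] at hi hj
      omega
    · ext x
      simp [mem_ab]
  | succ K ih =>
    rw [Finset.sum_range_succ] at hsum
    obtain ⟨A, h1, h2, h3⟩ := ih (fun k hk => hpow k (by omega)) (by omega)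
    obtain ⟨n, hn, hN⟩ := hpow K (by omega)
    have hcU : ((Finset.range K).biUnion A).card ≤ ∑ k ∈ Finset.range K, N k := by
      refine Finset.card_biUnion_le.trans (Finset.sum_le_sum fun k hk => ?_)
      obtain ⟨i, a, _, _, h, h'⟩ := h1 k (Finset.mem_range.1 hk)
      rw [h, h', card_ab]
    have hc := Finset.le_card_sdiff ((Finset.range K).biUnion A) (Finset.range (2 ^ m))
    rw [Finset.card_range] at hc
    obtain ⟨a, ha, hsub, hg⟩ := step m n hn _ (h3 K le_rfl) (by rw [← hN]; omega)
    have hdis : ∀ k < K, Disjoint (A k) (alignedBlock n a) := by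
      intro k hk
      rw [Finset.disjoint_left]
      intro x hx hx'
      exact (Finset.mem_sdiff.1 (hsub hx')).2
        (Finset.mem_biUnion.2 ⟨k, Finset.mem_range.2 hk, hx⟩)
    let B : ℕ → Finset ℕ := fun k => if k = K then alignedBlock n a else A k
    have hBK : B K = alignedBlock n a := if_pos rfl
    have hB : ∀ k < K, B k = A k := fun k hk => if_neg (by omega)
    have hU : ∀ k ≤ K, (Finset.range k).biUnion B = (Finset.range k).biUnion A := by
      intro k hk
      refine Finset.biUnion_congr rfl fun i hi => hB i ?_
      have := Finset.mem_range.1 hi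
      omega
    refine ⟨B, ?_, ?_, ?_⟩
    · intro k hk
      rcases Nat.lt_succ_iff_lt_or_eq.1 hk with h | rfl
      · rw [hB k h]; exact h1 k h
      · exact ⟨n, a, hn, ha, hN, hBK⟩
    · intro k hk l hl hkl
      rcases Nat.lt_succ_iff_lt_or_eq.1 hk with h | h <;>
      rcases Nat.lt_succ_iff_lt_or_eq.1 hl with h' | h'
      · rw [hB k h, hB l h']; exact h2 k h l h' hkl
      · rw [h', hB k h, hBK]; exact hdis k h
      · rw [h, hB l h', hBK]; exact (hdis l h').symm
      · omega
    · intro k hk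
      rcases Nat.le_succ_iff.1 hk with h | rfl
      · rw [hU k h]; exact h3 k h
      · have he : Finset.range (2 ^ m) \ (Finset.range (K + 1)).biUnion B =
            (Finset.range (2 ^ m) \ (Finset.range K).biUnion A) \ alignedBlock n a := by
          rw [Finset.range_add_one, Finset.biUnion_insert, hU K le_rfl, hBK, sdiff_sdiff,
            sup_comm]
          rfl
        rw [Nat.succ_eq_add_one, he]; exact hg
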